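/- Let S = {(x,y) ∈ ℝ² : −π/2 < x < π/2} be an infinite strip. For every constant C ≥ 0, the function h(x,y) = π²/4 − x² + C·e^{y}·cos x satisfies: (1) Δh = ∂²h/∂x² + ∂²h/∂y² = −2 on S; (2) h = 0 on the boundary ∂S = {(x,y) : x = ±π/2}; and (3) h > 0 on S. In particular, the boundary value problem Δh = −2 with zero boundary values on the unbounded domain S admits infinitely many positive solutions, one for each C ≥ 0, so conditions (i) and (ii) alone do not determine the expected exit time. -/

import Mathlib

open scoped Real

noncomputable section

lemma deriv_deriv_strip_fst (a b x : ℝ) :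
    deriv (deriv fun x' : ℝ => a - x' ^ 2 + b * Real.cos x') x = -2 - b * Real.cos x := by
  have hfst : (deriv fun x' : ℝ => a - x' ^ 2 + b * Real.cos x') =
      fun x' => -(2 * x') + b * -Real.sin x' := by
    funext t
    have h := ((hasDerivAt_pow 2 t).const_sub a).fun_add ((Real.hasDerivAt_cos t).const_mul b)
    exact h.deriv.trans (by simp)
  rw [hfst]
  have hsnd := ((hasDerivAt_id x).const_mul 2).fun_neg.fun_add
    ((Real.hasDerivAt_sin x).fun_neg.const_mul b)
  refine hsnd.deriv.trans ?_
  ring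

lemma deriv_deriv_strip_snd (a b c y : ℝ) :
    deriv (deriv fun y' : ℝ => a + b * Real.exp y' * c) y = b * Real.exp y * c := by
  have hderiv : (deriv fun y' : ℝ => a + b * Real.exp y' * c) =
      fun y' => b * Real.exp y' * c := by
    funext t
    exact ((((Real.hasDerivAt_exp t).const_mul b).mul_const c).const_add a).deriv
  rw [hderiv]
  simp

/-- On the strip `S = {(x,y) : -π/2 < x < π/2}`, for every `C ≥ 0`
the function `h(x,y) = π²/4 - x² + C e^y cos x` satisfies `Δh = -2` on `S`, vanishes
on the boundary lines `x = ±π/2`, and is positive on `S`. Hence the problem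
`Δh = -2`, `h = 0` on `∂S`, `h > 0`, admits infinitely many solutions on this
unbounded domain, so these conditions alone do not determine the expected exit time. -/
theorem strip_torsion_nonuniqueness (C : ℝ) (hC : 0 ≤ C)
    (h : ℝ → ℝ → ℝ)
    (hdef : ∀ x y : ℝ,
      h x y = π ^ 2 / 4 - x ^ 2 + C * Real.exp y * Real.cos x) :
    (∀ x y : ℝ, -(π / 2) < x → x < π / 2 →
      deriv (deriv (fun x' => h x' y)) x + deriv (deriv (fun y' => h x y')) y = -2) ∧
    (∀ y : ℝ, h (π / 2) y = 0 ∧ h (-(π / 2)) y = 0) ∧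
    (∀ x y : ℝ, -(π / 2) < x → x < π / 2 → 0 < h x y) := by
  refine ⟨fun x y _ _ => ?_, fun y => ?_, fun x y hx₁ hx₂ => ?_⟩
  · simp only [hdef]
    rw [deriv_deriv_strip_fst, deriv_deriv_strip_snd]
    ring
  · constructor
    · rw [hdef, Real.cos_pi_div_two]
      ring
    · rw [hdef, Real.cos_neg, Real.cos_pi_div_two]
      ring
  · have hcos : 0 < Real.cos x := Real.cos_pos_of_mem_Ioo ⟨hx₁, hx₂⟩
    have hmain : 0 ≤ C * Real.exp y * Real.cos x := by positivity
    rw [hdef]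
    nlinarith [mul_pos (sub_pos.2 hx₁) (sub_pos.2 hx₂)]
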